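/- Let f : ℝ^d → ℝ be a convex function of at most linear growth, p : ℝ^d → ℝ^d a subgradient selection, and Q(x) the matrix of Radon–Nikodym derivatives of the absolutely continuous parts of the second derivative measures of f. Then for every unit vector v ∈ ℝ^d, for Lebesgue-almost every x ∈ ℝ^d: lim_{r → 0} (1/r²) |f(x + rv) − f(x) − r⟨p(x), v⟩ − (r²/2)⟨Q(x) v, v⟩| = 0. -/

import Mathlib

open MeasureTheory Filter Metric
open scoped Topology ENNReal NNReal RealInnerProductSpace

/-- The second partial derivative `∂_i ∂_j φ` at `x`. -/
noncomputable def secondPartial (d : ℕ) (φ : EuclideanSpace ℝ (Fin d) → ℝ)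
    (i j : Fin d) (x : EuclideanSpace ℝ (Fin d)) : ℝ :=
  fderiv ℝ (fun z => fderiv ℝ φ z (EuclideanSpace.single j 1)) x (EuclideanSpace.single i 1)

/-- `μp, μn` represent the (signed) second derivative measures `μ_{ij} = μp i j - μn i j`
of the function `g`. -/
def IsSecondDerivMeasures (d : ℕ) (g : EuclideanSpace ℝ (Fin d) → ℝ)
    (μp μn : Fin d → Fin d → Measure (EuclideanSpace ℝ (Fin d))) : Prop :=
  (∀ i j, IsLocallyFiniteMeasure (μp i j)) ∧ (∀ i j, IsLocallyFiniteMeasure (μn i j)) ∧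
  ∀ i j, ∀ φ : EuclideanSpace ℝ (Fin d) → ℝ, ContDiff ℝ (⊤ : ℕ∞) φ → HasCompactSupport φ →
    (∫ x, φ x ∂(μp i j)) - (∫ x, φ x ∂(μn i j)) = ∫ x, g x * secondPartial d φ i j x

/-- The matrix of Radon–Nikodym derivatives of the absolutely continuous parts of the
second derivative measures. -/
noncomputable def densityMatrix (d : ℕ)
    (μp μn : Fin d → Fin d → Measure (EuclideanSpace ℝ (Fin d)))
    (x : EuclideanSpace ℝ (Fin d)) : Matrix (Fin d) (Fin d) ℝ :=
  Matrix.of fun i j =>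
    ((μp i j).rnDeriv volume x).toReal - ((μn i j).rnDeriv volume x).toReal

/-- The quadratic form `⟨M y, y⟩` of a matrix `M`. -/
noncomputable def quadForm (d : ℕ) (M : Matrix (Fin d) (Fin d) ℝ)
    (y : EuclideanSpace ℝ (Fin d)) : ℝ :=
  ∑ i, ∑ j, M i j * y i * y j

/-!
Restricted to a line, a convex function has a monotone right derivative, which is differentiable
almost everywhere, so by Fubini `f` has a second order expansion in the direction `v` at almost
every point; its linear coefficient is `⟪p x, v⟫` because `p x` is a subgradient. To identify the
quadratic coefficient `c`, combine the `μ_{ij}` into the distributional derivative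
`μ = ∂²f/∂v²`, a positive measure by convexity. The symmetric second difference quotient `Δ_r f`
is the average of `μ` against a tent kernel of width `r` in the direction `v`, and it tends to `c`
almost everywhere. Fatou's lemma gives `c ≤ dμ/dν`. Conversely `Δ_r f` dominates the average of
`dμ/dν`, and the averages `P_r g` of any `g ≥ 0` satisfy `g ≤ limsup P_r g` almost everywhere
by the reverse Fatou lemma applied to truncations of `g`, so `dμ/dν ≤ c`.
-/

lemma norm_image_sub_le_of_norm_right_deriv_le_uIcc {F : Type*} [NormedAddCommGroup F]
    [NormedSpace ℝ F] {h h' : ℝ → F} (hc : Continuous h)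
    (hd : ∀ x, HasDerivWithinAt h (h' x) (Set.Ici x) x) {a b C : ℝ}
    (hC : ∀ x ∈ Set.uIcc a b, ‖h' x‖ ≤ C) : ‖h b - h a‖ ≤ C * |b - a| := by
  wlog hab : a ≤ b generalizing a b
  · rw [norm_sub_rev, abs_sub_comm]
    exact this (Set.uIcc_comm a b ▸ hC) (le_of_not_ge hab)
  rw [Set.uIcc_of_le hab] at hC
  rw [abs_of_nonneg (sub_nonneg.2 hab)]
  exact norm_image_sub_le_of_norm_deriv_right_le_segment hc.continuousOn (fun x _ => hd x)
    (fun x hx => hC x (Set.Ico_subset_Icc_self hx)) b (Set.right_mem_Icc.2 hab)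

lemma isLittleO_sub_sq_of_right_deriv_isLittleO {F : Type*} [NormedAddCommGroup F]
    [NormedSpace ℝ F] {h h' : ℝ → F} {t : ℝ} (hc : Continuous h)
    (hd : ∀ x, HasDerivWithinAt h (h' x) (Set.Ici x) x)
    (ho : h' =o[𝓝 t] fun x => x - t) :
    (fun x => h x - h t) =o[𝓝 t] fun x => (x - t) ^ 2 := by
  refine Asymptotics.isLittleO_iff.2 fun ε hε => ?_
  obtain ⟨δ, hδ, hball⟩ := Metric.eventually_nhds_iff_ball.1 (Asymptotics.isLittleO_iff.1 ho hε)
  filter_upwards [ball_mem_nhds t hδ] with x hx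
  have hbound : ∀ y ∈ Set.uIcc t x, ‖h' y‖ ≤ ε * |x - t| := fun y hy => by
    have hyx : |y - t| ≤ |x - t| := Set.abs_sub_left_of_mem_uIcc hy
    exact (hball y (hyx.trans_lt hx)).trans (mul_le_mul_of_nonneg_left hyx hε.le)
  calc ‖h x - h t‖ ≤ ε * |x - t| * |x - t| :=
        norm_image_sub_le_of_norm_right_deriv_le_uIcc hc hd hbound
    _ = ε * ‖(x - t) ^ 2‖ := by rw [Real.norm_eq_abs, abs_pow]; ring

lemma tendsto_of_tendsto_comap_denseRange {ι X Y : Type*} [TopologicalSpace X]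
    [TopologicalSpace Y] [RegularSpace Y] {e : ι → X} (he : DenseRange e) {s : Set X}
    (hs : IsOpen s) {u : X → Y} (hu : ContinuousOn u s) {a : X} {l : Y}
    (h : Tendsto (u ∘ e) (comap e (𝓝[s] a)) (𝓝 l)) : Tendsto u (𝓝[s] a) (𝓝 l) := by
  refine (closed_nhds_basis l).tendsto_right_iff.2 fun C ⟨hCl, hC⟩ => ?_
  obtain ⟨T, hT, hTC⟩ := mem_comap.1 (h hCl)
  obtain ⟨W, hW, haW, hWT⟩ := mem_nhdsWithin.1 hT
  have hmaps : Set.MapsTo u (W ∩ s ∩ Set.range e) C := by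
    rintro _ ⟨hx, i, rfl⟩
    exact hTC (hWT hx)
  filter_upwards [inter_mem_nhdsWithin s (hW.mem_nhds haW)] with y ⟨hys, hyW⟩
  have hclosure := he.open_subset_closure_inter (hW.inter hs)
  exact hC.closure_subset_iff.2 hmaps.image_subset
    (mem_closure_image (hu.continuousAt (hs.mem_nhds hys)) (hclosure ⟨hyW, hys⟩))

lemma measurableSet_exists_tendsto_nhdsNE {X : Type*} [MeasurableSpace X] {u : X → ℝ → ℝ}
    (hmeas : ∀ r, Measurable fun x => u x r) (hcont : ∀ x, ContinuousOn (u x) {0}ᶜ) :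
    MeasurableSet {x | ∃ c, Tendsto (u x) (𝓝[≠] 0) (𝓝 c)} := by
  have hrat : {x | ∃ c, Tendsto (u x) (𝓝[≠] 0) (𝓝 c)} = {x | ∃ c,
      Tendsto (fun q : ℚ => u x q) (comap (fun q : ℚ => (q : ℝ)) (𝓝[≠] 0)) (𝓝 c)} := by
    ext x
    exact exists_congr fun c => ⟨fun h => h.comp tendsto_comap,
      tendsto_of_tendsto_comap_denseRange Rat.denseRange_cast isOpen_compl_singleton (hcont x)⟩
  rw [hrat]
  exact StronglyMeasurable.measurableSet_exists_tendsto fun q => (hmeas q).stronglyMeasurable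

section SecondOrderExpansion

variable {E : Type*} [NormedAddCommGroup E] [NormedSpace ℝ E] {f : E → ℝ} {a c : ℝ} {x v : E}

/-- Second order Taylor expansion of `f` at `x` in the direction `v`:
`f (x + r v) = f x + r a + r² c / 2 + o(r²)` as `r → 0`. -/
def HasSecondOrderExpansionAt (f : E → ℝ) (a c : ℝ) (x v : E) : Prop :=
  (fun r : ℝ => f (x + r • v) - f x - r * a - r ^ 2 / 2 * c) =o[𝓝[≠] 0] fun r => r ^ 2

lemma hasSecondOrderExpansionAt_iff_tendsto :
    HasSecondOrderExpansionAt f a c x v ↔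
      Tendsto (fun r : ℝ => 2 * (f (x + r • v) - f x - r * a) / r ^ 2) (𝓝[≠] 0) (𝓝 c) := by
  have hne : ∀ᶠ r : ℝ in 𝓝[≠] 0, r ≠ 0 := eventually_mem_nhdsWithin
  rw [HasSecondOrderExpansionAt, Asymptotics.isLittleO_iff_tendsto'
    (hne.mono fun r hr h => absurd h (pow_ne_zero 2 hr)), ← tendsto_sub_nhds_zero_iff (x := c)]
  constructor <;> intro h
  · refine (show Tendsto _ _ (𝓝 (0 : ℝ)) by simpa using h.const_mul 2).congr' ?_
    filter_upwards [hne] with r hr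
    field_simp
  · refine (show Tendsto _ _ (𝓝 (0 : ℝ)) by simpa using h.const_mul 2⁻¹).congr' ?_
    filter_upwards [hne] with r hr
    field_simp

lemma HasSecondOrderExpansionAt.hasLineDerivAt (h : HasSecondOrderExpansionAt f a c x v) :
    HasLineDerivAt ℝ f a x v := by
  have hlim := (tendsto_id.mono_left nhdsWithin_le_nhds).mul
    (hasSecondOrderExpansionAt_iff_tendsto.1 h)
  rw [hasLineDerivAt_iff_tendsto_slope_zero]
  have hslope := (hlim.div_const 2).add_const a
  rw [zero_mul, zero_div, zero_add] at hslope
  refine hslope.congr' (eventually_mem_nhdsWithin.mono fun r (hr : r ≠ 0) => ?_)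
  simp only [id, smul_eq_mul]
  field_simp
  ring

lemma HasSecondOrderExpansionAt.eq_inner_of_subgradient {E : Type*} [NormedAddCommGroup E]
    [InnerProductSpace ℝ E] {f : E → ℝ} {a c : ℝ} {x v p : E}
    (h : HasSecondOrderExpansionAt f a c x v) (hp : ∀ y, f x + ⟪p, y - x⟫ ≤ f y) :
    a = ⟪p, v⟫ := by
  have hmin : IsLocalMin (fun t : ℝ => f (x + t • v) - t * ⟪p, v⟫) 0 :=
    Eventually.of_forall fun t => by
      have := hp (x + t • v)
      rw [add_sub_cancel_left, real_inner_smul_right] at this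
      simp only [zero_smul, add_zero, zero_mul, sub_zero]
      linarith
  have hderiv : HasDerivAt (fun t : ℝ => f (x + t • v) - t * ⟪p, v⟫) (a - ⟪p, v⟫) 0 :=
    HasDerivAt.fun_sub h.hasLineDerivAt (hasDerivAt_mul_const ⟪p, v⟫)
  exact sub_eq_zero.1 (hmin.hasDerivAt_eq_zero hderiv)

lemma hasSecondOrderExpansionAt_add_smul_iff {y : E} {t : ℝ} :
    HasSecondOrderExpansionAt (fun s : ℝ => f (y + s • v)) a c t 1 ↔
      HasSecondOrderExpansionAt f a c (y + t • v) v := by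
  simp only [HasSecondOrderExpansionAt, smul_eq_mul, mul_one, add_smul, add_assoc]

lemma ae_exists_hasSecondOrderExpansionAt_real {g : ℝ → ℝ} (hg : ConvexOn ℝ Set.univ g) :
    ∀ᵐ t : ℝ, ∃ a c : ℝ, HasSecondOrderExpansionAt g a c t 1 := by
  set m : ℝ → ℝ := fun x => derivWithin g (Set.Ioi x) x
  have hmono : Monotone m := by
    simpa only [interior_univ, monotoneOn_univ] using hg.monotoneOn_rightDeriv
  have hgm : ∀ x, HasDerivWithinAt g (m x) (Set.Ici x) x := fun x =>
    (hg.hasDerivWithinAt_rightDeriv_of_mem_interior (by simp)).Ici_of_Ioi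
  have hcont : Continuous g := hg.locallyLipschitz.continuous
  filter_upwards [hmono.ae_differentiableAt] with t ht
  refine ⟨m t, deriv m t, ?_⟩
  have hquad : ∀ x, HasDerivAt (fun s => (s - t) * m t + (s - t) ^ 2 / 2 * deriv m t)
      (m t + (x - t) * deriv m t) x := fun x => by
    have hid := (hasDerivAt_id x).sub_const t
    convert! (hid.mul_const (m t)).add (((hid.pow 2).div_const 2).mul_const (deriv m t)) using 1
    simp
  have hrem := isLittleO_sub_sq_of_right_deriv_isLittleO (t := t)
    (by fun_prop) (fun x => (hgm x).sub (hquad x).hasDerivWithinAt)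
    ((hasDerivAt_iff_isLittleO.1 ht.hasDerivAt).congr_left fun x => by
      rw [smul_eq_mul]; ring)
  have hshift : Tendsto (fun r : ℝ => t + r) (𝓝[≠] 0) (𝓝 t) :=
    (Continuous.tendsto' (by fun_prop) 0 t (add_zero t)).mono_left nhdsWithin_le_nhds
  refine (hrem.comp_tendsto hshift).congr (fun r => ?_) fun r => ?_
  · simp only [Function.comp, Pi.sub_apply, smul_eq_mul]; ring_nf
  · simp

lemma convexOn_comp_add_smul (hf : ConvexOn ℝ Set.univ f) (y v : E) :
    ConvexOn ℝ Set.univ fun t : ℝ => f (y + t • v) := by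
  have hline : ∀ t : ℝ, AffineMap.lineMap y (y + v) t = y + t • v := fun t => by
    simp [AffineMap.lineMap_apply, add_comm]
  simpa only [Set.preimage_univ, Function.comp_def, hline] using
    hf.comp_affineMap (AffineMap.lineMap (k := ℝ) y (y + v))

variable [MeasurableSpace E] [BorelSpace E]

lemma measurableSet_exists_hasSecondOrderExpansionAt (hf : Continuous f) (v : E) :
    MeasurableSet {x | ∃ a c : ℝ, HasSecondOrderExpansionAt f a c x v} := by
  have hset : {x | ∃ a c : ℝ, HasSecondOrderExpansionAt f a c x v} =
      {x | LineDifferentiableAt ℝ f x v} ∩ {x | ∃ c, Tendsto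
        (fun r : ℝ => 2 * (f (x + r • v) - f x - r * lineDeriv ℝ f x v) / r ^ 2)
          (𝓝[≠] 0) (𝓝 c)} := by
    ext x
    constructor
    · rintro ⟨a, c, h⟩
      refine ⟨h.hasLineDerivAt.lineDifferentiableAt, c, ?_⟩
      rw [h.hasLineDerivAt.lineDeriv]
      exact hasSecondOrderExpansionAt_iff_tendsto.1 h
    · rintro ⟨-, c, h⟩
      exact ⟨_, c, hasSecondOrderExpansionAt_iff_tendsto.2 h⟩
  rw [hset]
  refine (measurableSet_lineDifferentiableAt hf).inter
    (measurableSet_exists_tendsto_nhdsNE (fun r => ?_) fun x => ?_)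
  · have := measurable_lineDeriv (𝕜 := ℝ) (v := v) hf
    have := hf.measurable
    fun_prop
  · exact ContinuousOn.div (by fun_prop) (by fun_prop) fun r hr => pow_ne_zero 2 hr

lemma ae_exists_hasSecondOrderExpansionAt [FiniteDimensional ℝ E] (ν : Measure E)
    [ν.IsAddHaarMeasure] (hf : ConvexOn ℝ Set.univ f) (v : E) :
    ∀ᵐ x ∂ν, ∃ a c : ℝ, HasSecondOrderExpansionAt f a c x v := by
  refine ae_mem_of_ae_add_linearMap_mem (LinearMap.toSpanSingleton ℝ E v) volume ν
    (measurableSet_exists_hasSecondOrderExpansionAt hf.locallyLipschitz.continuous v) fun y => ?_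
  filter_upwards [ae_exists_hasSecondOrderExpansionAt_real (convexOn_comp_add_smul hf y v)]
    with t ⟨a, c, h⟩
  exact ⟨a, c, hasSecondOrderExpansionAt_add_smul_iff.1 h⟩

end SecondOrderExpansion

section TestFunctions

variable {E : Type*} [NormedAddCommGroup E] [NormedSpace ℝ E]

/-- Smooth compactly supported functions `φ ∈ C_c^∞(E)`. -/
structure IsTestFunction (φ : E → ℝ) : Prop where
  contDiff : ContDiff ℝ (⊤ : ℕ∞) φ
  hasCompactSupport : HasCompactSupport φ

variable [FiniteDimensional ℝ E]

lemma exists_isTestFunction_of_isCompact_subset_isOpen {K U : Set E} (hK : IsCompact K)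
    (hU : IsOpen U) (hKU : K ⊆ U) :
    ∃ φ : E → ℝ, IsTestFunction φ ∧ (∀ x, φ x ∈ Set.Icc 0 1) ∧ (∀ x ∈ K, φ x = 1) ∧
      ∀ x ∉ U, φ x = 0 := by
  obtain ⟨K', hK', hKK', hK'U⟩ := exists_compact_between hK hU hKU
  obtain ⟨φ, hzero, hone, hIcc⟩ := exists_contMDiffMap_zero_one_of_isClosed (n := (⊤ : ℕ∞))
    (modelWithCornersSelf ℝ E) isOpen_interior.isClosed_compl hK.isClosed
    (Set.disjoint_compl_left_iff_subset.2 hKK')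
  have hzero' : ∀ x ∉ K', φ x = 0 := fun x hx => hzero fun hx' => hx (interior_subset hx')
  exact ⟨φ, ⟨φ.contMDiff.contDiff, HasCompactSupport.intro hK' hzero'⟩, hIcc,
    fun x hx => hone hx, fun x hx => hzero' x fun hx' => hx (hK'U hx')⟩

variable [MeasurableSpace E] [BorelSpace E] {μ ν : Measure E}

lemma measure_isCompact_le_of_forall_lintegral_isTestFunction_le [IsLocallyFiniteMeasure ν]
    (h : ∀ φ : E → ℝ, IsTestFunction φ → 0 ≤ φ →
      ∫⁻ x, ENNReal.ofReal (φ x) ∂μ ≤ ∫⁻ x, ENNReal.ofReal (φ x) ∂ν)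
    {K : Set E} (hK : IsCompact K) : μ K ≤ ν K := by
  rw [hK.measure_eq_iInf_isOpen (μ := ν)]
  refine le_iInf₂ fun U hKU => le_iInf fun hU => ?_
  obtain ⟨φ, hφ, hIcc, hone, hzero⟩ := exists_isTestFunction_of_isCompact_subset_isOpen hK hU hKU
  calc μ K = ∫⁻ x, K.indicator 1 x ∂μ := (lintegral_indicator_one hK.measurableSet).symm
    _ ≤ ∫⁻ x, ENNReal.ofReal (φ x) ∂μ := lintegral_mono <|
        Set.indicator_le fun x hx => by simp [hone x hx]
    _ ≤ ∫⁻ x, ENNReal.ofReal (φ x) ∂ν := h φ hφ fun x => (hIcc x).1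
    _ ≤ ∫⁻ x, U.indicator 1 x ∂ν := lintegral_mono fun x => by
        by_cases hx : x ∈ U
        · simp [hx, (hIcc x).2]
        · simp [hzero x hx]
    _ = ν U := lintegral_indicator_one hU.measurableSet

lemma measure_le_of_forall_lintegral_isTestFunction_le [IsLocallyFiniteMeasure ν]
    (h : ∀ φ : E → ℝ, IsTestFunction φ → 0 ≤ φ →
      ∫⁻ x, ENNReal.ofReal (φ x) ∂μ ≤ ∫⁻ x, ENNReal.ofReal (φ x) ∂ν) :
    μ ≤ ν := by
  have hcompact : ∀ K : Set E, IsCompact K → μ K ≤ ν K := fun K =>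
    measure_isCompact_le_of_forall_lintegral_isTestFunction_le h
  have : IsLocallyFiniteMeasure μ := ⟨fun x => ⟨closedBall x 1, closedBall_mem_nhds x one_pos,
    (hcompact _ (isCompact_closedBall x 1)).trans_lt (isCompact_closedBall x 1).measure_lt_top⟩⟩
  refine Measure.le_iff.2 fun s hs => ?_
  rw [hs.measure_eq_iSup_isCompact]
  exact iSup₂_le fun K hKs => iSup_le fun hK => (hcompact K hK).trans (measure_mono hKs)

lemma ae_le_of_forall_lintegral_isTestFunction_mul_le [SigmaFinite ν] {g₁ g₂ : E → ℝ≥0∞}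
    (hg₁ : Measurable g₁) (hg₂ : Measurable g₂) [IsLocallyFiniteMeasure (ν.withDensity g₂)]
    (h : ∀ φ : E → ℝ, IsTestFunction φ → 0 ≤ φ →
      ∫⁻ x, ENNReal.ofReal (φ x) * g₁ x ∂ν ≤ ∫⁻ x, ENNReal.ofReal (φ x) * g₂ x ∂ν) :
    g₁ ≤ᵐ[ν] g₂ := by
  have hle : ν.withDensity g₁ ≤ ν.withDensity g₂ :=
    measure_le_of_forall_lintegral_isTestFunction_le fun φ hφ hφ0 => by
      have hmeas := hφ.contDiff.continuous.measurable.ennreal_ofReal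
      rw [lintegral_withDensity_eq_lintegral_mul _ hg₁ hmeas,
        lintegral_withDensity_eq_lintegral_mul _ hg₂ hmeas]
      simpa only [Pi.mul_apply, mul_comm] using h φ hφ hφ0
  refine ae_le_of_forall_setLIntegral_le_of_sigmaFinite hg₁ fun s hs _ => ?_
  simpa only [withDensity_apply _ hs] using hle s

end TestFunctions

section RadonNikodym

variable {X : Type*} [MeasurableSpace X] {μ ν α β : Measure X}

lemma toReal_rnDeriv_add (α β ν : Measure X) [SigmaFinite α] [SigmaFinite β] [SigmaFinite ν] :
    ∀ᵐ x ∂ν, ((α + β).rnDeriv ν x).toReal =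
      (α.rnDeriv ν x).toReal + (β.rnDeriv ν x).toReal := by
  filter_upwards [Measure.rnDeriv_add' α β ν, Measure.rnDeriv_ne_top α ν,
    Measure.rnDeriv_ne_top β ν] with x hx hα hβ
  rw [hx, Pi.add_apply, ENNReal.toReal_add hα hβ]

lemma exists_add_eq_of_measure_le [SigmaFinite α] [SigmaFinite β] (h : β ≤ α) :
    ∃ μ : Measure X, β + μ = α := by
  refine ⟨α.withDensity fun x => 1 - β.rnDeriv α x, ?_⟩
  have hβ := Measure.withDensity_rnDeriv_eq β α (Measure.absolutelyContinuous_of_le h)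
  calc β + α.withDensity (fun x => 1 - β.rnDeriv α x)
      = α.withDensity (β.rnDeriv α + fun x => 1 - β.rnDeriv α x) := by
        rw [withDensity_add_left (Measure.measurable_rnDeriv β α), hβ]
    _ = α.withDensity 1 := withDensity_congr_ae <| by
        filter_upwards [Measure.rnDeriv_le_one_of_le h] with x hx
        exact add_tsub_cancel_of_le hx
    _ = α := withDensity_one

lemma rnDeriv_ae_mono [SigmaFinite α] [SigmaFinite β] [SigmaFinite ν] (h : β ≤ α) :
    β.rnDeriv ν ≤ᵐ[ν] α.rnDeriv ν := by
  obtain ⟨μ, rfl⟩ := exists_add_eq_of_measure_le h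
  have : SigmaFinite μ := Measure.sigmaFinite_of_le (β + μ) (Measure.le_add_left le_rfl)
  filter_upwards [Measure.rnDeriv_add' β μ ν] with x hx
  rw [hx]
  exact le_self_add

lemma ae_le_rnDeriv_of_withDensity_le [SigmaFinite μ] [SigmaFinite ν] {g : X → ℝ≥0∞}
    (hg : Measurable g) (h : ν.withDensity g ≤ μ) : g ≤ᵐ[ν] μ.rnDeriv ν := by
  have : SigmaFinite (ν.withDensity g) := Measure.sigmaFinite_of_le μ h
  exact (Measure.rnDeriv_withDensity ν hg).symm.le.trans (rnDeriv_ae_mono h)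

end RadonNikodym

section SecondDerivative

variable {E : Type*} [NormedAddCommGroup E] [NormedSpace ℝ E] {φ : E → ℝ}

namespace IsTestFunction

lemma fderiv_apply (hφ : IsTestFunction φ) (v : E) :
    IsTestFunction fun x => fderiv ℝ φ x v :=
  ⟨(hφ.contDiff.fderiv_right (m := (⊤ : ℕ∞)) (by simp)).clm_apply contDiff_const,
    hφ.hasCompactSupport.fderiv_apply (𝕜 := ℝ) v⟩

lemma comp_add_right (hφ : IsTestFunction φ) (w : E) : IsTestFunction fun x => φ (x + w) :=
  ⟨hφ.contDiff.comp (contDiff_id.add contDiff_const),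
    hφ.hasCompactSupport.comp_homeomorph (Homeomorph.addRight w)⟩

lemma comp_neg (hφ : IsTestFunction φ) : IsTestFunction fun x => φ (-x) :=
  ⟨hφ.contDiff.comp contDiff_neg, hφ.hasCompactSupport.comp_homeomorph (Homeomorph.neg E)⟩

variable [MeasurableSpace E] [BorelSpace E]

lemma integrable (hφ : IsTestFunction φ) (μ : Measure E) [IsLocallyFiniteMeasure μ] :
    Integrable φ μ :=
  hφ.contDiff.continuous.integrable_of_hasCompactSupport hφ.hasCompactSupport

lemma measurable_ofReal (hφ : IsTestFunction φ) : Measurable fun x => ENNReal.ofReal (φ x) :=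
  hφ.contDiff.continuous.measurable.ennreal_ofReal

lemma lintegral_ofReal_eq (hφ : IsTestFunction φ) (hφ0 : 0 ≤ φ) (μ : Measure E)
    [IsLocallyFiniteMeasure μ] :
    ∫⁻ x, ENNReal.ofReal (φ x) ∂μ = ENNReal.ofReal (∫ x, φ x ∂μ) :=
  (ofReal_integral_eq_lintegral_ofReal (hφ.integrable μ) (.of_forall hφ0)).symm

lemma continuous_integral_mul_comp_add_smul (hφ : IsTestFunction φ) {f : E → ℝ} {μ : Measure E}
    (hf : LocallyIntegrable f μ) (v : E) :
    Continuous fun τ : ℝ => ∫ x, f x * φ (x + τ • v) ∂μ := by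
  have hconv := hφ.comp_neg.hasCompactSupport.continuous_convolution_right
    (ContinuousLinearMap.mul ℝ ℝ) hf hφ.comp_neg.contDiff.continuous
  convert hconv.comp (show Continuous fun τ : ℝ => -(τ • v) by fun_prop) using 2 with τ
  simp [convolution_def]

lemma continuous_integral_comp_add_smul (hφ : IsTestFunction φ) (μ : Measure E)
    [IsLocallyFiniteMeasure μ] (v : E) : Continuous fun τ : ℝ => ∫ x, φ (x + τ • v) ∂μ := by
  simpa only [one_mul] using
    hφ.continuous_integral_mul_comp_add_smul (locallyIntegrable_const (μ := μ) 1) v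

lemma hasDerivAt_integral_mul_comp_add_smul (hφ : IsTestFunction φ) {f : E → ℝ} {ν : Measure E}
    [ν.IsAddLeftInvariant] [SFinite ν] (hf : LocallyIntegrable f ν) (v : E) (τ : ℝ) :
    HasDerivAt (fun τ : ℝ => ∫ x, f x * φ (x + τ • v) ∂ν)
      (∫ x, f x * fderiv ℝ φ (x + τ • v) v ∂ν) τ := by
  have hneg := hφ.comp_neg
  have hconv := hneg.hasCompactSupport.hasFDerivAt_convolution_right
    (ContinuousLinearMap.mul ℝ ℝ) hf (hneg.contDiff.of_le (by simp)) (-(τ • v))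
  have hline : HasDerivAt (fun τ : ℝ => -(τ • v)) (-v) τ := by
    simpa using ((hasDerivAt_id τ).smul_const v).fun_neg
  have hfderiv : ∀ y, fderiv ℝ (fun x => φ (-x)) y (-v) = fderiv ℝ φ (-y) v := fun y => by
    have hφy := (hφ.contDiff.differentiable (by simp) (-y)).hasFDerivAt
    have hcomp : HasFDerivAt (fun x => φ (-x)) _ y := hφy.comp y (hasFDerivAt_id y).fun_neg
    simp [hcomp.fderiv]
  convert! hconv.comp_hasDerivAt τ hline using 1
  · ext τ
    simp [convolution_def]
  · rw [convolution_precompR_apply _ hf (hneg.hasCompactSupport.fderiv ℝ)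
      (hneg.contDiff.continuous_fderiv (by simp))]
    simp only [convolution_def, hfderiv, neg_sub, sub_neg_eq_add, ContinuousLinearMap.mul_apply']

end IsTestFunction

/-- The second derivative `∂²φ/∂v²` of `φ` in the direction `v`, in the iterated form of
`secondPartial`. -/
noncomputable def secondDirDeriv (φ : E → ℝ) (v x : E) : ℝ :=
  fderiv ℝ (fun z => fderiv ℝ φ z v) x v

lemma isTestFunction_secondDirDeriv (hφ : IsTestFunction φ) (v : E) :
    IsTestFunction (secondDirDeriv φ v) :=
  (hφ.fderiv_apply v).fderiv_apply v

lemma secondDirDeriv_comp_add_right (φ : E → ℝ) (v w x : E) :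
    secondDirDeriv (fun z => φ (z + w)) v x = secondDirDeriv φ v (x + w) := by
  simp only [secondDirDeriv, fderiv_comp_add_right]
  rw [fderiv_comp_add_right w (f := fun z => fderiv ℝ φ z v)]

/-- The symmetric second difference quotient `Δ_r f(x)` of `f` in the direction `v`. -/
noncomputable def secondDiffQuotient (f : E → ℝ) (v : E) (r : ℝ) (x : E) : ℝ :=
  (f (x + r • v) + f (x - r • v) - 2 * f x) / r ^ 2

lemma continuous_secondDiffQuotient {f : E → ℝ} (hf : Continuous f) (v : E) (r : ℝ) :
    Continuous (secondDiffQuotient f v r) := by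
  unfold secondDiffQuotient
  fun_prop

lemma secondDiffQuotient_nonneg {f : E → ℝ} (hf : ConvexOn ℝ Set.univ f) (v : E) (r : ℝ) (x : E) :
    0 ≤ secondDiffQuotient f v r x := by
  have hmid := hf.2 (Set.mem_univ (x + r • v)) (Set.mem_univ (x - r • v))
    (by norm_num : (0 : ℝ) ≤ 1 / 2) (by norm_num : (0 : ℝ) ≤ 1 / 2) (by norm_num)
  have hx : (1 / 2 : ℝ) • (x + r • v) + (1 / 2 : ℝ) • (x - r • v) = x := by module
  rw [hx, smul_eq_mul, smul_eq_mul] at hmid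
  exact div_nonneg (by linarith) (sq_nonneg r)

lemma HasSecondOrderExpansionAt.tendsto_secondDiffQuotient {f : E → ℝ} {a c : ℝ} {x v : E}
    (h : HasSecondOrderExpansionAt f a c x v) :
    Tendsto (fun r => secondDiffQuotient f v r x) (𝓝[≠] 0) (𝓝 c) := by
  have hneg : Tendsto (fun r : ℝ => -r) (𝓝[≠] 0) (𝓝[≠] 0) :=
    (Continuous.tendsto' continuous_neg 0 0 neg_zero).inf
      (tendsto_principal_principal.2 fun r hr => neg_ne_zero.2 hr)
  have hlim := hasSecondOrderExpansionAt_iff_tendsto.1 h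
  have havg := (hlim.add (hlim.comp hneg)).div_const 2
  rw [add_self_div_two] at havg
  refine havg.congr fun r => ?_
  simp only [secondDiffQuotient, Function.comp, neg_smul, ← sub_eq_add_neg, even_two.neg_pow]
  ring

end SecondDerivative

section TentMeasure

/-- The law of the difference of two independent uniform variables on `(0, 1]`, whose density is
the tent function `s ↦ max 0 (1 - |s|)`. It represents second differences as averages of second
derivatives. -/
noncomputable def tentMeasure : Measure ℝ :=
  (((volume : Measure ℝ).restrict (Set.Ioc 0 1)).prod
    ((volume : Measure ℝ).restrict (Set.Ioc 0 1))).map fun p => p.1 - p.2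

instance : IsProbabilityMeasure tentMeasure := by
  have : IsProbabilityMeasure ((volume : Measure ℝ).restrict (Set.Ioc 0 1)) := ⟨by simp⟩
  exact Measure.isProbabilityMeasure_map (by fun_prop)

lemma ae_tentMeasure_mem_Icc : ∀ᵐ s ∂tentMeasure, s ∈ Set.Icc (-1 : ℝ) 1 := by
  rw [tentMeasure, ae_map_iff (by fun_prop) (p := (· ∈ Set.Icc (-1 : ℝ) 1)) measurableSet_Icc,
    Measure.prod_restrict]
  filter_upwards [ae_restrict_mem (measurableSet_Ioc.prod measurableSet_Ioc)] with p hp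
  constructor <;> linarith [hp.1.1, hp.1.2, hp.2.1, hp.2.2]

lemma integral_tentMeasure {g : ℝ → ℝ} (hg : Continuous g) :
    ∫ s, g s ∂tentMeasure = ∫ a in (0 : ℝ)..1, ∫ b in (0 : ℝ)..1, g (a - b) := by
  have hcont : Continuous fun p : ℝ × ℝ => g (p.1 - p.2) := by fun_prop
  rw [tentMeasure, integral_map (by fun_prop) hg.aestronglyMeasurable, integral_prod]
  · simp only [intervalIntegral.integral_of_le zero_le_one]
  · rw [Measure.prod_restrict]
    exact (hcont.continuousOn.integrableOn_compact (isCompact_Icc.prod isCompact_Icc)).mono_set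
      (Set.prod_mono Set.Ioc_subset_Icc_self Set.Ioc_subset_Icc_self)

lemma integral_tentMeasure_second_deriv {u u' u'' : ℝ → ℝ} (hu : ∀ t, HasDerivAt u (u' t) t)
    (hu' : ∀ t, HasDerivAt u' (u'' t) t) (hc : Continuous u'') {r : ℝ} (hr : r ≠ 0) :
    ∫ s, u'' (r * s) ∂tentMeasure = (u r + u (-r) - 2 * u 0) / r ^ 2 := by
  have hcu' : Continuous u' := continuous_iff_continuousAt.2 fun t => (hu' t).continuousAt
  have hinner : ∀ a : ℝ, ∫ b in (0 : ℝ)..1, u'' (r * (a - b)) =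
      (u' (r * a) - u' (r * a - r)) / r := fun a => by
    simp only [mul_sub]
    rw [intervalIntegral.integral_comp_sub_mul _ hr,
      intervalIntegral.integral_eq_sub_of_hasDerivAt (fun t _ => hu' t)
        (hc.intervalIntegrable _ _)]
    simp [div_eq_inv_mul]
  rw [integral_tentMeasure (by fun_prop)]
  simp only [hinner]
  rw [intervalIntegral.integral_div, intervalIntegral.integral_sub
      (Continuous.intervalIntegrable (by fun_prop) _ _)
      (Continuous.intervalIntegrable (by fun_prop) _ _),
    intervalIntegral.integral_comp_mul_left _ hr, intervalIntegral.integral_comp_mul_sub _ hr,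
    intervalIntegral.integral_eq_sub_of_hasDerivAt (fun t _ => hu t) (hcu'.intervalIntegrable _ _),
    intervalIntegral.integral_eq_sub_of_hasDerivAt (fun t _ => hu t) (hcu'.intervalIntegrable _ _)]
  simp only [mul_one, mul_zero, smul_eq_mul, sub_self, zero_sub]
  field_simp
  ring

lemma tendsto_integral_tentMeasure_comp_mul {G : ℝ → ℝ} (hG : Continuous G) :
    Tendsto (fun r => ∫ s, G (r * s) ∂tentMeasure) (𝓝 0) (𝓝 (G 0)) := by
  have hcont : Continuous fun r => ∫ s in Set.Icc (-1) 1, G (r * s) ∂tentMeasure :=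
    continuous_parametric_integral_of_continuous (by fun_prop) isCompact_Icc
  rw [Measure.restrict_eq_self_of_ae_mem ae_tentMeasure_mem_Icc] at hcont
  exact hcont.tendsto' 0 _ (by simp)

end TentMeasure

section SecondDirDerivMeasure

variable {E : Type*} [NormedAddCommGroup E] [NormedSpace ℝ E] [MeasurableSpace E]
  {ν μ α β : Measure E} {f φ : E → ℝ} {v : E}

/-- `μ` is the distributional second derivative `∂²f/∂v²` of `f` with respect to the reference
measure `ν`. -/
def IsSecondDirDerivMeasure (f : E → ℝ) (v : E) (ν μ : Measure E) : Prop :=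
  ∀ φ : E → ℝ, IsTestFunction φ → ∫ x, φ x ∂μ = ∫ x, f x * secondDirDeriv φ v x ∂ν

lemma IsSecondDirDerivMeasure.integral_comp_add_right (h : IsSecondDirDerivMeasure f v ν μ)
    (hφ : IsTestFunction φ) (w : E) :
    ∫ x, φ (x + w) ∂μ = ∫ x, f x * secondDirDeriv φ v (x + w) ∂ν := by
  simpa only [secondDirDeriv_comp_add_right] using h _ (hφ.comp_add_right w)

variable [BorelSpace E] [ν.IsAddHaarMeasure]

lemma IsTestFunction.integral_mul_secondDiffQuotient (hφ : IsTestFunction φ) (hf : Continuous f)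
    (v : E) (r : ℝ) :
    ∫ x, φ x * secondDiffQuotient f v r x ∂ν =
      (∫ x, f x * φ (x + r • v) ∂ν + ∫ x, f x * φ (x + (-r) • v) ∂ν -
        2 * ∫ x, f x * φ (x + (0 : ℝ) • v) ∂ν) / r ^ 2 := by
  have hint : ∀ w, Integrable (fun x => φ x * f (x + w)) ν := fun w =>
    (hφ.contDiff.continuous.mul (by fun_prop)).integrable_of_hasCompactSupport
      hφ.hasCompactSupport.mul_right
  have htranslate : ∀ w, ∫ x, f x * φ (x + w) ∂ν = ∫ x, φ x * f (x + -w) ∂ν := fun w => by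
    rw [← integral_add_right_eq_self (fun x => φ x * f (x + -w)) w]
    simp only [add_neg_cancel_right, mul_comm]
  simp only [htranslate]
  rw [← integral_add (hint _) (hint _), ← integral_const_mul,
    ← integral_sub ((hint _).fun_add (hint _)) ((hint _).const_mul 2), ← integral_div]
  refine integral_congr_ae (.of_forall fun x => ?_)
  simp only [secondDiffQuotient, neg_smul, neg_neg, zero_smul, neg_zero, add_zero, sub_eq_add_neg]
  ring

variable [FiniteDimensional ℝ E]

lemma IsTestFunction.integral_mul_secondDiffQuotient_eq_integral_tentMeasure
    (hφ : IsTestFunction φ) (hf : Continuous f) (v : E) {r : ℝ} (hr : r ≠ 0) :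
    ∫ x, φ x * secondDiffQuotient f v r x ∂ν =
      ∫ s, ∫ x, f x * secondDirDeriv φ v (x + (r * s) • v) ∂ν ∂tentMeasure := by
  have hloc : LocallyIntegrable f ν := hf.locallyIntegrable
  rw [hφ.integral_mul_secondDiffQuotient hf]
  exact (integral_tentMeasure_second_deriv (hφ.hasDerivAt_integral_mul_comp_add_smul hloc v)
    ((hφ.fderiv_apply v).hasDerivAt_integral_mul_comp_add_smul hloc v)
    ((isTestFunction_secondDirDeriv hφ v).continuous_integral_mul_comp_add_smul hloc v) hr).symm

lemma IsTestFunction.tendsto_integral_mul_secondDiffQuotient (hφ : IsTestFunction φ)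
    (hf : Continuous f) (v : E) :
    Tendsto (fun r => ∫ x, φ x * secondDiffQuotient f v r x ∂ν) (𝓝[≠] 0)
      (𝓝 (∫ x, f x * secondDirDeriv φ v x ∂ν)) := by
  have hlim := tendsto_integral_tentMeasure_comp_mul
    ((isTestFunction_secondDirDeriv hφ v).continuous_integral_mul_comp_add_smul
      (hf.locallyIntegrable (μ := ν)) v)
  simp only [zero_smul, add_zero] at hlim
  refine (hlim.mono_left nhdsWithin_le_nhds).congr' ?_
  filter_upwards [eventually_mem_nhdsWithin] with r hr
  exact (hφ.integral_mul_secondDiffQuotient_eq_integral_tentMeasure hf v hr).symm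

lemma IsTestFunction.integral_mul_secondDirDeriv_nonneg (hφ : IsTestFunction φ) (hφ0 : 0 ≤ φ)
    (hf : ConvexOn ℝ Set.univ f) (v : E) : 0 ≤ ∫ x, f x * secondDirDeriv φ v x ∂ν :=
  ge_of_tendsto' (hφ.tendsto_integral_mul_secondDiffQuotient hf.locallyLipschitz.continuous v)
    fun r => integral_nonneg fun x => mul_nonneg (hφ0 x) (secondDiffQuotient_nonneg hf v r x)

lemma exists_add_eq_and_isSecondDirDerivMeasure [IsLocallyFiniteMeasure α]
    [IsLocallyFiniteMeasure β] (hf : ConvexOn ℝ Set.univ f)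
    (h : ∀ φ : E → ℝ, IsTestFunction φ →
      ∫ x, φ x ∂α - ∫ x, φ x ∂β = ∫ x, f x * secondDirDeriv φ v x ∂ν) :
    ∃ μ : Measure E, IsLocallyFiniteMeasure μ ∧ β + μ = α ∧ IsSecondDirDerivMeasure f v ν μ := by
  have hle : β ≤ α := measure_le_of_forall_lintegral_isTestFunction_le fun φ hφ hφ0 => by
    rw [hφ.lintegral_ofReal_eq hφ0, hφ.lintegral_ofReal_eq hφ0]
    have := hφ.integral_mul_secondDirDeriv_nonneg (ν := ν) hφ0 hf v
    exact ENNReal.ofReal_le_ofReal (by linarith [h φ hφ])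
  obtain ⟨μ, rfl⟩ := exists_add_eq_of_measure_le hle
  have hμ : IsLocallyFiniteMeasure μ :=
    Measure.isLocallyFiniteMeasure_of_le (μ := β + μ) (Measure.le_add_left le_rfl)
  refine ⟨μ, hμ, rfl, fun φ hφ => ?_⟩
  rw [← h φ hφ, integral_add_measure (hφ.integrable β) (hφ.integrable μ), add_sub_cancel_left]

end SecondDirDerivMeasure

section TentAverage

variable {E : Type*} [NormedAddCommGroup E] [NormedSpace ℝ E]

/-- The average of `g` over the segment `[x - r v, x + r v]`, weighted by the tent kernel. -/
noncomputable def tentAverage (v : E) (r : ℝ) (g : E → ℝ≥0∞) (x : E) : ℝ≥0∞ :=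
  ∫⁻ s, g (x + (r * s) • v) ∂tentMeasure

lemma tentAverage_mono (v : E) (r : ℝ) {g₁ g₂ : E → ℝ≥0∞} (h : g₁ ≤ g₂) :
    tentAverage v r g₁ ≤ tentAverage v r g₂ :=
  fun _ => lintegral_mono fun _ => h _

lemma tentAverage_const (v : E) (r : ℝ) (c : ℝ≥0∞) :
    tentAverage v r (fun _ => c) = fun _ => c := by
  ext x
  simp [tentAverage]

variable [FiniteDimensional ℝ E] [MeasurableSpace E] [BorelSpace E] {ν μ : Measure E} {φ : E → ℝ}

lemma measurable_tentAverage {g : E → ℝ≥0∞} (hg : Measurable g) (v : E) (r : ℝ) :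
    Measurable (tentAverage v r g) :=
  Measurable.lintegral_prod_right' (f := fun p : E × ℝ => g (p.1 + (r * p.2) • v)) (by fun_prop)

lemma lintegral_tentAverage [SFinite μ] {g : E → ℝ≥0∞} (hg : Measurable g) (v : E) (r : ℝ) :
    ∫⁻ x, tentAverage v r g x ∂μ = ∫⁻ s, ∫⁻ x, g (x + (r * s) • v) ∂μ ∂tentMeasure :=
  lintegral_lintegral_swap (by fun_prop)

lemma lintegral_mul_tentAverage_neg [SFinite ν] [ν.IsAddRightInvariant] {g h : E → ℝ≥0∞}
    (hg : Measurable g) (hh : Measurable h) (v : E) (r : ℝ) :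
    ∫⁻ x, g x * tentAverage v (-r) h x ∂ν = ∫⁻ x, tentAverage v r g x * h x ∂ν := by
  calc ∫⁻ x, g x * tentAverage v (-r) h x ∂ν
      = ∫⁻ x, ∫⁻ s, g x * h (x + (-r * s) • v) ∂tentMeasure ∂ν :=
        lintegral_congr fun x => (lintegral_const_mul _ (by fun_prop)).symm
    _ = ∫⁻ s, ∫⁻ x, g x * h (x + (-r * s) • v) ∂ν ∂tentMeasure :=
        lintegral_lintegral_swap (by fun_prop)
    _ = ∫⁻ s, ∫⁻ x, g (x + (r * s) • v) * h x ∂ν ∂tentMeasure := lintegral_congr fun s => by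
        rw [← lintegral_add_right_eq_self _ ((r * s) • v)]
        simp only [neg_mul, neg_smul, add_neg_cancel_right]
    _ = ∫⁻ x, ∫⁻ s, g (x + (r * s) • v) * h x ∂tentMeasure ∂ν :=
        lintegral_lintegral_swap (by fun_prop)
    _ = ∫⁻ x, tentAverage v r g x * h x ∂ν :=
        lintegral_congr fun x => lintegral_mul_const _ (by fun_prop)

lemma IsTestFunction.lintegral_tentAverage_eq (hφ : IsTestFunction φ) (hφ0 : 0 ≤ φ)
    [IsLocallyFiniteMeasure μ] (v : E) (r : ℝ) :
    ∫⁻ x, tentAverage v r (fun y => ENNReal.ofReal (φ y)) x ∂μ =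
      ENNReal.ofReal (∫ s, ∫ x, φ (x + (r * s) • v) ∂μ ∂tentMeasure) := by
  have hint : Integrable (fun s : ℝ => ∫ x, φ (x + (r * s) • v) ∂μ) tentMeasure := by
    rw [← Measure.restrict_eq_self_of_ae_mem ae_tentMeasure_mem_Icc]
    exact ((hφ.continuous_integral_comp_add_smul μ v).comp
      (continuous_const_mul r)).continuousOn.integrableOn_compact isCompact_Icc
  rw [lintegral_tentAverage hφ.measurable_ofReal,
    ofReal_integral_eq_lintegral_ofReal hint
      (.of_forall fun s => integral_nonneg fun x => hφ0 (x + (r * s) • v))]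
  exact lintegral_congr fun s =>
    (hφ.comp_add_right _).lintegral_ofReal_eq (fun x => hφ0 (x + (r * s) • v)) μ

lemma IsTestFunction.tendsto_lintegral_tentAverage (hφ : IsTestFunction φ) (hφ0 : 0 ≤ φ)
    (μ : Measure E) [IsLocallyFiniteMeasure μ] (v : E) :
    Tendsto (fun r => ∫⁻ x, tentAverage v r (fun y => ENNReal.ofReal (φ y)) x ∂μ) (𝓝 0)
      (𝓝 (∫⁻ x, ENNReal.ofReal (φ x) ∂μ)) := by
  have hlim := tendsto_integral_tentMeasure_comp_mul (hφ.continuous_integral_comp_add_smul μ v)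
  simp only [zero_smul, add_zero] at hlim
  simpa only [hφ.lintegral_tentAverage_eq hφ0, hφ.lintegral_ofReal_eq hφ0] using
    ENNReal.tendsto_ofReal hlim

end TentAverage

section Density

variable {E : Type*} [NormedAddCommGroup E] [NormedSpace ℝ E] [FiniteDimensional ℝ E]
  [MeasurableSpace E] [BorelSpace E] {ν μ : Measure E} [ν.IsAddHaarMeasure] {f : E → ℝ} {v : E}
  {r : ℕ → ℝ}

lemma IsTestFunction.tendsto_lintegral_mul_tentAverage {φ : E → ℝ} (hφ : IsTestFunction φ)
    (hφ0 : 0 ≤ φ) {g : E → ℝ≥0∞} (hg : Measurable g) [IsLocallyFiniteMeasure (ν.withDensity g)]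
    (v : E) :
    Tendsto (fun r => ∫⁻ x, ENNReal.ofReal (φ x) * tentAverage v r g x ∂ν) (𝓝 0)
      (𝓝 (∫⁻ x, ENNReal.ofReal (φ x) * g x ∂ν)) := by
  have hwd : ∀ u : E → ℝ≥0∞, Measurable u →
      ∫⁻ x, u x ∂ν.withDensity g = ∫⁻ x, u x * g x ∂ν := fun u hu => by
    simp only [lintegral_withDensity_eq_lintegral_mul ν hg hu, Pi.mul_apply, mul_comm]
  have hlim := (hφ.tendsto_lintegral_tentAverage hφ0 (ν.withDensity g) v).comp
    (Continuous.tendsto' continuous_neg (0 : ℝ) 0 neg_zero)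
  simpa only [Function.comp_def, hwd _ hφ.measurable_ofReal,
    hwd _ (measurable_tentAverage hφ.measurable_ofReal v _),
    ← lintegral_mul_tentAverage_neg hφ.measurable_ofReal hg, neg_neg] using hlim

lemma ae_le_limsup_tentAverage_of_le_const {g : E → ℝ≥0∞} (hg : Measurable g) {C : ℝ≥0}
    (hgC : ∀ x, g x ≤ C) (v : E) (hr : Tendsto r atTop (𝓝 0)) :
    g ≤ᵐ[ν] fun x => limsup (fun n => tentAverage v (r n) g x) atTop := by
  have hle : ∀ n x, tentAverage v (r n) g x ≤ C := fun n x =>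
    (tentAverage_mono v (r n) hgC x).trans_eq (congrFun (tentAverage_const v (r n) C) x)
  have hmeas := fun n => measurable_tentAverage hg v (r n)
  have hfinite : ∀ u : E → ℝ≥0∞, (∀ x, u x ≤ C) → IsLocallyFiniteMeasure (ν.withDensity u) :=
    fun u hu =>
      have := IsLocallyFiniteMeasure.withDensity_coe (μ := ν) (continuous_const (y := C))
      Measure.isLocallyFiniteMeasure_of_le (withDensity_mono (.of_forall hu))
  have hfinite_g := hfinite g hgC
  have hfinite_limsup := hfinite (fun x => limsup (fun n => tentAverage v (r n) g x) atTop)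
    fun x => limsup_le_of_le (h := .of_forall fun n => hle n x)
  refine ae_le_of_forall_lintegral_isTestFunction_mul_le hg (.limsup hmeas) fun φ hφ hφ0 => ?_
  have hbound : ∫⁻ x, ENNReal.ofReal (φ x) * C ∂ν ≠ ∞ := by
    rw [lintegral_mul_const _ hφ.measurable_ofReal, hφ.lintegral_ofReal_eq hφ0]
    exact ENNReal.mul_ne_top ENNReal.ofReal_ne_top ENNReal.coe_ne_top
  calc ∫⁻ x, ENNReal.ofReal (φ x) * g x ∂ν
      = limsup (fun n => ∫⁻ x, ENNReal.ofReal (φ x) * tentAverage v (r n) g x ∂ν) atTop :=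
        ((hφ.tendsto_lintegral_mul_tentAverage hφ0 hg v).comp hr).limsup_eq.symm
    _ ≤ ∫⁻ x, limsup (fun n => ENNReal.ofReal (φ x) * tentAverage v (r n) g x) atTop ∂ν :=
        limsup_lintegral_le _ (fun n => hφ.measurable_ofReal.mul (hmeas n))
          (fun n => .of_forall fun x => mul_le_mul_right (hle n x) _) hbound
    _ = ∫⁻ x, ENNReal.ofReal (φ x) * limsup (fun n => tentAverage v (r n) g x) atTop ∂ν :=
        lintegral_congr fun x => ENNReal.limsup_const_mul_of_ne_top ENNReal.ofReal_ne_top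

lemma ae_le_limsup_tentAverage {g : E → ℝ≥0∞} (hg : Measurable g) (v : E)
    (hr : Tendsto r atTop (𝓝 0)) :
    g ≤ᵐ[ν] fun x => limsup (fun n => tentAverage v (r n) g x) atTop := by
  have htrunc : ∀ᵐ x ∂ν, ∀ C : ℕ,
      min (g x) C ≤ limsup (fun n => tentAverage v (r n) g x) atTop := by
    refine ae_all_iff.2 fun C => ?_
    filter_upwards [ae_le_limsup_tentAverage_of_le_const (ν := ν) (C := C)
      (hg.min measurable_const) (fun x => min_le_right (g x) C) v hr] with x hx
    exact hx.trans <| limsup_le_limsup <| .of_forall fun n =>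
      tentAverage_mono v (r n) (fun y => min_le_left (g y) C) x
  filter_upwards [htrunc] with x hx
  by_contra! hlt
  obtain ⟨C, hC⟩ := ENNReal.exists_nat_gt (ne_top_of_lt hlt)
  exact (hx C).not_gt (lt_min hlt hC)

variable [IsLocallyFiniteMeasure μ]

lemma IsSecondDirDerivMeasure.lintegral_mul_secondDiffQuotient
    (h : IsSecondDirDerivMeasure f v ν μ) (hf : ConvexOn ℝ Set.univ f) {φ : E → ℝ}
    (hφ : IsTestFunction φ) (hφ0 : 0 ≤ φ) {r : ℝ} (hr : r ≠ 0) :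
    ∫⁻ x, ENNReal.ofReal (φ x) * ENNReal.ofReal (secondDiffQuotient f v r x) ∂ν =
      ∫⁻ x, tentAverage v r (fun y => ENNReal.ofReal (φ y)) x ∂μ := by
  have hcont : Continuous f := hf.locallyLipschitz.continuous
  have hint : Integrable (fun x => φ x * secondDiffQuotient f v r x) ν :=
    (hφ.contDiff.continuous.mul
      (continuous_secondDiffQuotient hcont v r)).integrable_of_hasCompactSupport
        hφ.hasCompactSupport.mul_right
  have hnonneg : ∀ x, 0 ≤ φ x * secondDiffQuotient f v r x := fun x =>
    mul_nonneg (hφ0 x) (secondDiffQuotient_nonneg hf v r x)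
  simp only [hφ.lintegral_tentAverage_eq hφ0, h.integral_comp_add_right hφ,
    ← hφ.integral_mul_secondDiffQuotient_eq_integral_tentMeasure hcont v hr,
    ← ENNReal.ofReal_mul (hφ0 _)]
  exact (ofReal_integral_eq_lintegral_ofReal hint (.of_forall hnonneg)).symm

lemma IsSecondDirDerivMeasure.liminf_secondDiffQuotient_ae_le_rnDeriv
    (h : IsSecondDirDerivMeasure f v ν μ) (hf : ConvexOn ℝ Set.univ f)
    (hr : Tendsto r atTop (𝓝[≠] 0)) :
    (fun x => liminf (fun n => ENNReal.ofReal (secondDiffQuotient f v (r n) x)) atTop)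
      ≤ᵐ[ν] μ.rnDeriv ν := by
  have hmeas : ∀ n, Measurable fun x => ENNReal.ofReal (secondDiffQuotient f v (r n) x) := fun n =>
    (continuous_secondDiffQuotient hf.locallyLipschitz.continuous v _).measurable.ennreal_ofReal
  refine ae_le_rnDeriv_of_withDensity_le (.liminf hmeas)
    (measure_le_of_forall_lintegral_isTestFunction_le fun φ hφ hφ0 => ?_)
  have hlim := (hφ.tendsto_lintegral_tentAverage hφ0 μ v).comp
    (hr.mono_right nhdsWithin_le_nhds)
  calc ∫⁻ x, ENNReal.ofReal (φ x) ∂ν.withDensity _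
      = ∫⁻ x, liminf (fun n => ENNReal.ofReal (φ x) *
          ENNReal.ofReal (secondDiffQuotient f v (r n) x)) atTop ∂ν := by
        rw [lintegral_withDensity_eq_lintegral_mul _ (.liminf hmeas) hφ.measurable_ofReal]
        refine lintegral_congr fun x => ?_
        rw [Pi.mul_apply, mul_comm]
        exact (ENNReal.liminf_const_mul_of_ne_top ENNReal.ofReal_ne_top).symm
    _ ≤ liminf (fun n => ∫⁻ x, ENNReal.ofReal (φ x) *
          ENNReal.ofReal (secondDiffQuotient f v (r n) x) ∂ν) atTop :=
        lintegral_liminf_le fun n => hφ.measurable_ofReal.mul (hmeas n)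
    _ = ∫⁻ x, ENNReal.ofReal (φ x) ∂μ := by
        refine Tendsto.liminf_eq (hlim.congr' ?_)
        filter_upwards [hr.eventually eventually_mem_nhdsWithin] with n hn
        exact (h.lintegral_mul_secondDiffQuotient hf hφ hφ0 hn).symm

lemma IsSecondDirDerivMeasure.tentAverage_rnDeriv_ae_le
    (h : IsSecondDirDerivMeasure f v ν μ) (hf : ConvexOn ℝ Set.univ f) {r : ℝ} (hr : r ≠ 0) :
    tentAverage v (-r) (μ.rnDeriv ν)
      ≤ᵐ[ν] fun x => ENNReal.ofReal (secondDiffQuotient f v r x) := by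
  have hcont := continuous_secondDiffQuotient hf.locallyLipschitz.continuous v r
  have : IsLocallyFiniteMeasure
      (ν.withDensity fun x => ENNReal.ofReal (secondDiffQuotient f v r x)) :=
    IsLocallyFiniteMeasure.withDensity_ofReal hcont
  have hq : Measurable (μ.rnDeriv ν) := Measure.measurable_rnDeriv μ ν
  refine ae_le_of_forall_lintegral_isTestFunction_mul_le (measurable_tentAverage hq v (-r))
    hcont.measurable.ennreal_ofReal fun φ hφ hφ0 => ?_
  have hPφ := measurable_tentAverage hφ.measurable_ofReal v r
  calc ∫⁻ x, ENNReal.ofReal (φ x) * tentAverage v (-r) (μ.rnDeriv ν) x ∂ν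
      = ∫⁻ x, tentAverage v r (fun y => ENNReal.ofReal (φ y)) x * μ.rnDeriv ν x ∂ν :=
        lintegral_mul_tentAverage_neg hφ.measurable_ofReal hq v r
    _ = ∫⁻ x, tentAverage v r (fun y => ENNReal.ofReal (φ y)) x ∂ν.withDensity (μ.rnDeriv ν) := by
        simp only [lintegral_withDensity_eq_lintegral_mul ν hq hPφ, Pi.mul_apply, mul_comm]
    _ ≤ ∫⁻ x, tentAverage v r (fun y => ENNReal.ofReal (φ y)) x ∂μ :=
        lintegral_mono' (Measure.withDensity_rnDeriv_le μ ν) le_rfl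
    _ = ∫⁻ x, ENNReal.ofReal (φ x) * ENNReal.ofReal (secondDiffQuotient f v r x) ∂ν :=
        (h.lintegral_mul_secondDiffQuotient hf hφ hφ0 hr).symm

lemma IsSecondDirDerivMeasure.rnDeriv_ae_le_limsup_secondDiffQuotient
    (h : IsSecondDirDerivMeasure f v ν μ) (hf : ConvexOn ℝ Set.univ f)
    (hr : Tendsto r atTop (𝓝[≠] 0)) :
    μ.rnDeriv ν ≤ᵐ[ν]
      fun x => limsup (fun n => ENNReal.ofReal (secondDiffQuotient f v (r n) x)) atTop := by
  have hneg : Tendsto (fun n => -r n) atTop (𝓝 0) := by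
    simpa only [neg_zero] using (hr.mono_right nhdsWithin_le_nhds).neg
  have hle : ∀ᵐ x ∂ν, ∀ n, r n ≠ 0 → tentAverage v (-r n) (μ.rnDeriv ν) x ≤
      ENNReal.ofReal (secondDiffQuotient f v (r n) x) :=
    ae_all_iff.2 fun n => eventually_imp_distrib_left.2 fun hn => h.tentAverage_rnDeriv_ae_le hf hn
  filter_upwards [hle, ae_le_limsup_tentAverage (Measure.measurable_rnDeriv μ ν) v hneg]
    with x hx hlimsup
  exact hlimsup.trans <| limsup_le_limsup <|
    (hr.eventually eventually_mem_nhdsWithin).mono hx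

lemma IsSecondDirDerivMeasure.ae_exists_hasSecondOrderExpansionAt_rnDeriv
    (h : IsSecondDirDerivMeasure f v ν μ) (hf : ConvexOn ℝ Set.univ f) :
    ∀ᵐ x ∂ν, ∃ a, HasSecondOrderExpansionAt f a (μ.rnDeriv ν x).toReal x v := by
  have hr : Tendsto (fun n : ℕ => 1 / ((n : ℝ) + 1)) atTop (𝓝[≠] 0) :=
    tendsto_nhdsWithin_iff.2 ⟨tendsto_one_div_add_atTop_nhds_zero_nat,
      .of_forall fun n => (Nat.one_div_pos_of_nat (α := ℝ)).ne'⟩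
  filter_upwards [ae_exists_hasSecondOrderExpansionAt ν hf v,
    h.liminf_secondDiffQuotient_ae_le_rnDeriv hf hr,
    h.rnDeriv_ae_le_limsup_secondDiffQuotient hf hr] with x ⟨a, c, hac⟩ hliminf hlimsup
  have hc : 0 ≤ c := ge_of_tendsto' hac.tendsto_secondDiffQuotient fun r =>
    secondDiffQuotient_nonneg hf v r x
  have hlim := ENNReal.tendsto_ofReal (hac.tendsto_secondDiffQuotient.comp hr)
  have hrn : μ.rnDeriv ν x = ENNReal.ofReal c :=
    le_antisymm (hlimsup.trans_eq hlim.limsup_eq) (hlim.liminf_eq.symm.trans_le hliminf)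
  exact ⟨a, by rwa [hrn, ENNReal.toReal_ofReal hc]⟩

end Density

section RadonDensity

lemma isLocallyFiniteMeasure_add {X : Type*} [TopologicalSpace X] [MeasurableSpace X]
    (α β : Measure X) [IsLocallyFiniteMeasure α] [IsLocallyFiniteMeasure β] :
    IsLocallyFiniteMeasure (α + β) := ⟨fun x => by
  obtain ⟨s, hs, hαs⟩ := α.finiteAt_nhds x
  obtain ⟨t, ht, hβt⟩ := β.finiteAt_nhds x
  refine ⟨s ∩ t, inter_mem hs ht, ?_⟩
  rw [Measure.add_apply]
  exact ENNReal.add_lt_top.2 ⟨(measure_mono Set.inter_subset_left).trans_lt hαs,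
    (measure_mono Set.inter_subset_right).trans_lt hβt⟩⟩

variable {E : Type*} [NormedAddCommGroup E] [NormedSpace ℝ E] [MeasurableSpace E]

/-- The functional `T` on test functions is integration against a signed Radon measure, given as a
difference `α - β` of locally finite measures, whose absolutely continuous part has density `q`
with respect to `ν`. -/
def HasRadonDensity (ν : Measure E) (T : (E → ℝ) → ℝ) (q : E → ℝ) : Prop :=
  ∃ α β : Measure E, IsLocallyFiniteMeasure α ∧ IsLocallyFiniteMeasure β ∧
    (∀ φ, IsTestFunction φ → ∫ x, φ x ∂α - ∫ x, φ x ∂β = T φ) ∧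
    ∀ᵐ x ∂ν, (α.rnDeriv ν x).toReal - (β.rnDeriv ν x).toReal = q x

variable {ν : Measure E} {T T₁ T₂ : (E → ℝ) → ℝ} {q q₁ q₂ : E → ℝ}

namespace HasRadonDensity

lemma zero (ν : Measure E) [SigmaFinite ν] : HasRadonDensity ν 0 0 :=
  ⟨0, 0, inferInstance, inferInstance, by simp, by simp⟩

lemma neg (h : HasRadonDensity ν T q) : HasRadonDensity ν (-T) (-q) := by
  obtain ⟨α, β, hα, hβ, hT, hq⟩ := h
  refine ⟨β, α, hβ, hα, fun φ hφ => ?_, hq.mono fun x hx => ?_⟩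
  · rw [Pi.neg_apply, ← hT φ hφ, neg_sub]
  · rw [Pi.neg_apply, ← hx, neg_sub]

variable [FiniteDimensional ℝ E] [SigmaFinite ν]

lemma smul_of_nonneg (h : HasRadonDensity ν T q) {c : ℝ} (hc : 0 ≤ c) :
    HasRadonDensity ν (c • T) (c • q) := by
  lift c to ℝ≥0 using hc
  obtain ⟨α, β, hα, hβ, hT, hq⟩ := h
  refine ⟨c • α, c • β, inferInstance, inferInstance, fun φ hφ => ?_, ?_⟩
  · rw [integral_smul_nnreal_measure, integral_smul_nnreal_measure, ← smul_sub, hT φ hφ]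
    rfl
  · filter_upwards [hq, Measure.rnDeriv_smul_left' α ν c, Measure.rnDeriv_smul_left' β ν c]
      with x hx hα hβ
    rw [hα, hβ, Pi.smul_apply, Pi.smul_apply, ENNReal.toReal_smul, ENNReal.toReal_smul, ← smul_sub,
      hx]
    rfl

lemma const_smul (h : HasRadonDensity ν T q) (c : ℝ) : HasRadonDensity ν (c • T) (c • q) := by
  rcases le_total 0 c with hc | hc
  · exact h.smul_of_nonneg hc
  · simpa only [neg_smul, neg_neg] using (h.smul_of_nonneg (neg_nonneg.2 hc)).neg

variable [BorelSpace E]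

lemma add (h₁ : HasRadonDensity ν T₁ q₁) (h₂ : HasRadonDensity ν T₂ q₂) :
    HasRadonDensity ν (T₁ + T₂) (q₁ + q₂) := by
  obtain ⟨α₁, β₁, hα₁, hβ₁, hT₁, hq₁⟩ := h₁
  obtain ⟨α₂, β₂, hα₂, hβ₂, hT₂, hq₂⟩ := h₂
  refine ⟨α₁ + α₂, β₁ + β₂, isLocallyFiniteMeasure_add α₁ α₂, isLocallyFiniteMeasure_add β₁ β₂,
    fun φ hφ => ?_, ?_⟩
  · rw [integral_add_measure (hφ.integrable α₁) (hφ.integrable α₂),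
      integral_add_measure (hφ.integrable β₁) (hφ.integrable β₂), add_sub_add_comm, hT₁ φ hφ,
      hT₂ φ hφ, Pi.add_apply]
  · filter_upwards [hq₁, hq₂, toReal_rnDeriv_add α₁ α₂ ν, toReal_rnDeriv_add β₁ β₂ ν]
      with x hx₁ hx₂ hα hβ
    rw [hα, hβ, add_sub_add_comm, hx₁, hx₂, Pi.add_apply]

lemma sum {ι : Type*} (s : Finset ι) {T : ι → (E → ℝ) → ℝ} {q : ι → E → ℝ}
    (h : ∀ i ∈ s, HasRadonDensity ν (T i) (q i)) :
    HasRadonDensity ν (∑ i ∈ s, T i) (∑ i ∈ s, q i) := by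
  classical
  induction s using Finset.induction_on with
  | empty => exact zero ν
  | insert i s hi ih =>
    rw [Finset.sum_insert hi, Finset.sum_insert hi]
    exact (h i (Finset.mem_insert_self i s)).add (ih fun j hj => h j (Finset.mem_insert_of_mem hj))

end HasRadonDensity

lemma HasRadonDensity.ae_exists_hasSecondOrderExpansionAt [FiniteDimensional ℝ E] [BorelSpace E]
    [ν.IsAddHaarMeasure] {f : E → ℝ} {v : E} (hf : ConvexOn ℝ Set.univ f)
    (h : HasRadonDensity ν (fun φ => ∫ x, f x * secondDirDeriv φ v x ∂ν) q) :
    ∀ᵐ x ∂ν, ∃ a, HasSecondOrderExpansionAt f a (q x) x v := by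
  obtain ⟨α, β, hα, hβ, hT, hq⟩ := h
  obtain ⟨μ, hμ, rfl, hfμ⟩ := exists_add_eq_and_isSecondDirDerivMeasure hf hT
  filter_upwards [hfμ.ae_exists_hasSecondOrderExpansionAt_rnDeriv hf, hq,
    toReal_rnDeriv_add β μ ν] with x hx hqx hadd
  rwa [← hqx, hadd, add_sub_cancel_left]

end RadonDensity

section Euclidean

variable {d : ℕ} {f : EuclideanSpace ℝ (Fin d) → ℝ}

lemma continuousLinearMap_apply_eq_sum (L : EuclideanSpace ℝ (Fin d) →L[ℝ] ℝ)
    (v : EuclideanSpace ℝ (Fin d)) :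
    L v = ∑ i, v i * L (EuclideanSpace.single i (1 : ℝ)) := by
  conv_lhs => rw [← (EuclideanSpace.basisFun (Fin d) ℝ).sum_repr v]
  simp

lemma isTestFunction_secondPartial {φ : EuclideanSpace ℝ (Fin d) → ℝ} (hφ : IsTestFunction φ)
    (i j : Fin d) : IsTestFunction (secondPartial d φ i j) :=
  (hφ.fderiv_apply _).fderiv_apply _

lemma secondDirDeriv_eq_sum_secondPartial {φ : EuclideanSpace ℝ (Fin d) → ℝ}
    (hφ : IsTestFunction φ) (v x : EuclideanSpace ℝ (Fin d)) :
    secondDirDeriv φ v x = ∑ i, ∑ j, v i * v j * secondPartial d φ i j x := by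
  have hdiff : ∀ w, Differentiable ℝ fun z => fderiv ℝ φ z w := fun w =>
    (hφ.fderiv_apply w).contDiff.differentiable (by simp)
  have hfirst : (fun z => fderiv ℝ φ z v) =
      fun z => ∑ j, v j * fderiv ℝ φ z (EuclideanSpace.single j 1) :=
    funext fun z => continuousLinearMap_apply_eq_sum _ v
  rw [secondDirDeriv, hfirst, fderiv_fun_sum fun j _ => ((hdiff _).const_mul _).differentiableAt,
    continuousLinearMap_apply_eq_sum]
  refine Finset.sum_congr rfl fun i _ => ?_
  rw [sum_apply, Finset.mul_sum]
  refine Finset.sum_congr rfl fun j _ => ?_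
  rw [fderiv_const_mul (hdiff _).differentiableAt, secondPartial, smul_apply, smul_eq_mul,
    mul_assoc]

variable {μp μn : Fin d → Fin d → Measure (EuclideanSpace ℝ (Fin d))}

lemma IsSecondDerivMeasures.hasRadonDensity (hμ : IsSecondDerivMeasures d f μp μn) (i j : Fin d) :
    HasRadonDensity volume (fun φ => ∫ x, f x * secondPartial d φ i j x)
      fun x => densityMatrix d μp μn x i j :=
  ⟨μp i j, μn i j, hμ.1 i j, hμ.2.1 i j,
    fun φ hφ => hμ.2.2 i j φ hφ.contDiff hφ.hasCompactSupport, .of_forall fun _ => rfl⟩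

lemma integral_mul_secondDirDeriv_eq_sum (hf : Continuous f) {φ : EuclideanSpace ℝ (Fin d) → ℝ}
    (hφ : IsTestFunction φ) (v : EuclideanSpace ℝ (Fin d)) :
    ∫ x, f x * secondDirDeriv φ v x =
      ∑ i, ∑ j, v i * v j * ∫ x, f x * secondPartial d φ i j x := by
  have hint (i j) : Integrable fun x => v i * v j * (f x * secondPartial d φ i j x) := by
    have htest := isTestFunction_secondPartial hφ i j
    exact ((hf.mul htest.contDiff.continuous).integrable_of_hasCompactSupport
      htest.hasCompactSupport.mul_left).const_mul _
  simp only [secondDirDeriv_eq_sum_secondPartial hφ, Finset.mul_sum, mul_left_comm (f _),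
    ← integral_const_mul]
  rw [integral_finsetSum _ fun i _ => integrable_finsetSum _ fun j _ => hint i j]
  exact Finset.sum_congr rfl fun i _ => integral_finsetSum _ fun j _ => hint i j

lemma IsSecondDerivMeasures.hasRadonDensity_quadForm (hμ : IsSecondDerivMeasures d f μp μn)
    (hf : Continuous f) (v : EuclideanSpace ℝ (Fin d)) :
    HasRadonDensity volume (fun φ => ∫ x, f x * secondDirDeriv φ v x)
      fun x => quadForm d (densityMatrix d μp μn x) v := by
  obtain ⟨α, β, hα, hβ, hT, hq⟩ := HasRadonDensity.sum Finset.univ fun i _ =>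
    HasRadonDensity.sum Finset.univ fun j _ => (hμ.hasRadonDensity i j).const_smul (v i * v j)
  refine ⟨α, β, hα, hβ, fun φ hφ => ?_, hq.mono fun x hx => ?_⟩
  · simp only [hT φ hφ, integral_mul_secondDirDeriv_eq_sum hf hφ, Finset.sum_apply,
      Pi.smul_apply, smul_eq_mul]
  · simp only [hx, quadForm, Finset.sum_apply, Pi.smul_apply, smul_eq_mul, mul_comm, mul_assoc]

end Euclidean

theorem second_directional_derivative_ae_general (d : ℕ)
    (f : EuclideanSpace ℝ (Fin d) → ℝ) (hf : ConvexOn ℝ Set.univ f)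
    (p : EuclideanSpace ℝ (Fin d) → EuclideanSpace ℝ (Fin d))
    (hp : ∀ x y, f x + ⟪p x, y - x⟫ ≤ f y)
    (μp μn : Fin d → Fin d → Measure (EuclideanSpace ℝ (Fin d)))
    (hμ : IsSecondDerivMeasures d f μp μn)
    (v : EuclideanSpace ℝ (Fin d)) :
    ∀ᵐ x ∂(volume : Measure (EuclideanSpace ℝ (Fin d))),
      Tendsto
        (fun r : ℝ => (1 / r ^ 2) *
          |f (x + r • v) - f x - r * ⟪p x, v⟫ -
            (r ^ 2 / 2) * quadForm d (densityMatrix d μp μn x) v|)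
        (𝓝[≠] 0) (𝓝 0) := by
  have hdensity := hμ.hasRadonDensity_quadForm hf.locallyLipschitz.continuous v
  filter_upwards [hdensity.ae_exists_hasSecondOrderExpansionAt hf] with x ⟨a, ha⟩
  obtain rfl := ha.eq_inner_of_subgradient (hp x)
  refine (Asymptotics.IsLittleO.tendsto_div_nhds_zero ha.norm_left).congr fun r => ?_
  rw [Real.norm_eq_abs, div_eq_inv_mul, one_div]

theorem second_directional_derivative_ae (d : ℕ)
    (f : EuclideanSpace ℝ (Fin d) → ℝ) (hf : ConvexOn ℝ Set.univ f)
    (A B : ℝ) (hgrowth : ∀ y, |f y| ≤ A * ‖y‖ + B)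
    (p : EuclideanSpace ℝ (Fin d) → EuclideanSpace ℝ (Fin d))
    (hp : ∀ x y, f x + ⟪p x, y - x⟫ ≤ f y)
    (μp μn : Fin d → Fin d → Measure (EuclideanSpace ℝ (Fin d)))
    (hμ : IsSecondDerivMeasures d f μp μn)
    (v : EuclideanSpace ℝ (Fin d)) (hv : ‖v‖ = 1) :
    ∀ᵐ x ∂(volume : Measure (EuclideanSpace ℝ (Fin d))),
      Filter.Tendsto
        (fun r : ℝ => (1 / r ^ 2) *
          |f (x + r • v) - f x - r * ⟪p x, v⟫ -
            (r ^ 2 / 2) * quadForm d (densityMatrix d μp μn x) v|)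
        (nhdsWithin 0 {(0 : ℝ)}ᶜ) (nhds 0) :=
  second_directional_derivative_ae_general d f hf p hp μp μn hμ v
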